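/- arXiv:1702.08093 — 4 statements merged into one kernel-verified Lean document; each statement's English description precedes it below -/
import Mathlib

section
/- Let X = ℝ² ∖ {0} with the action of the multiplicative group G = ℝ_{>0} of positive reals by scalar multiplication, λ·A = λA. Then the set S = {(x, ±1/x) : x ∈ ℝ ∖ {0}} ∪ {(0, ±1), (±1, 0)} is a global H-slice of X for the trivial subgroup H = {1}, but S is not a small subset of X, and the corresponding slicing map f_S : X → G is not continuous. -/
open scoped Pointwise

variable (G : Type*) [Group G] [TopologicalSpace G]
variable (X : Type*) [TopologicalSpace X] [MulAction G X]

/-- The transporter `⟨U,V⟩ = {g ∈ G : gU ∩ V ≠ ∅}` from `U` to `V`. -/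
def transporter (U V : Set X) : Set G := {g : G | ((g • U) ∩ V).Nonempty}

/-- `U` is a small subset of `X`: every point of `X` has a neighborhood `V` thin
relative to `U`, i.e. such that the transporter `⟨U,V⟩` has compact closure in `G`. -/
def IsSmallSet (U : Set X) : Prop :=
  ∀ x : X, ∃ V ∈ nhds x, IsCompact (closure (transporter G X U V))

/-- `X` is a proper `G`-space in the sense of Palais:
every point of `X` has a small neighborhood. -/
def IsPalaisProper : Prop := ∀ x : X, ∃ U ∈ nhds x, IsSmallSet G X U

/-- The saturation `G(S) = {gs : g ∈ G, s ∈ S}` of a subset `S ⊆ X`. -/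
def saturation (S : Set X) : Set X := ⋃ g : G, g • S

/-- `S` is an `H`-slice in `X`: `S` is `H`-invariant, closed in its saturation `G(S)`
(expressed as `closure S ∩ G(S) ⊆ S`), `gS ∩ S ≠ ∅` implies `g ∈ H`, and `G(S)` is open. -/
structure IsSlice (H : Subgroup G) (S : Set X) : Prop where
  invariant : ∀ h ∈ H, ∀ s ∈ S, h • s ∈ S
  closed_in_saturation : closure S ∩ saturation G X S ⊆ S
  mem_of_smul_inter : ∀ g : G, ((g • S) ∩ S).Nonempty → g ∈ H
  open_saturation : IsOpen (saturation G X S)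

/-- `S` is a global `H`-slice of `X`: an `H`-slice with `G(S) = X`. -/
def IsGlobalSlice (H : Subgroup G) (S : Set X) : Prop :=
  IsSlice G X H S ∧ saturation G X S = Set.univ

noncomputable section

/-- The multiplicative group `ℝ_{>0}` of positive real numbers. -/
abbrev Rpos : Type := {x : ℝ // 0 < x}

/-- The punctured plane `X = ℝ² ∖ {0}` (with the Euclidean norm). -/
abbrev PlaneX : Type := {p : EuclideanSpace ℝ (Fin 2) // p ≠ 0}

instance : SMul Rpos PlaneX :=
  ⟨fun g p => ⟨(g : ℝ) • (p : EuclideanSpace ℝ (Fin 2)),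
    smul_ne_zero (ne_of_gt g.2) p.2⟩⟩

instance : MulAction Rpos PlaneX where
  one_smul p := Subtype.ext (one_smul ℝ (p : EuclideanSpace ℝ (Fin 2)))
  mul_smul g h p := Subtype.ext (mul_smul (g : ℝ) (h : ℝ) (p : EuclideanSpace ℝ (Fin 2)))

/-- The set `S = {(x, ±1/x) : x ∈ ℝ ∖ {0}} ∪ {(0, ±1), (±1, 0)}` in the punctured
plane. -/
def hyperbolaSlice : Set PlaneX :=
  {p | ((p : EuclideanSpace ℝ (Fin 2)) 0 ≠ 0 ∧
          ((p : EuclideanSpace ℝ (Fin 2)) 1 = 1 / (p : EuclideanSpace ℝ (Fin 2)) 0 ∨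
           (p : EuclideanSpace ℝ (Fin 2)) 1 = -(1 / (p : EuclideanSpace ℝ (Fin 2)) 0))) ∨
       ((p : EuclideanSpace ℝ (Fin 2)) 0 = 0 ∧
          ((p : EuclideanSpace ℝ (Fin 2)) 1 = 1 ∨ (p : EuclideanSpace ℝ (Fin 2)) 1 = -1)) ∨
       ((p : EuclideanSpace ℝ (Fin 2)) 1 = 0 ∧
          ((p : EuclideanSpace ℝ (Fin 2)) 0 = 1 ∨ (p : EuclideanSpace ℝ (Fin 2)) 0 = -1))}

/-!
The set `S` is the level set `ρ = 1` of a homogeneous function `ρ : X → ℝ_{>0}` of degree one, and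
such a level set is a global `{1}`-slice as soon as it is closed, with slicing map `ρ`. The
transporter `⟨S, V⟩` is the image of `V` under the slicing map, so smallness of `S` says that the
slicing map is locally relatively compact. Near `(1, 0)` this fails, since `ρ(1, t) = √t` leaves
every compact subset of `ℝ_{>0}` as `t → 0⁺`. As `ℝ_{>0}` is locally compact, a continuous slicing
map would make `S` small.
-/

open Filter Topology

section SlicingMap

variable {G : Type*} [Group G] {X : Type*} [MulAction G X]

theorem mem_saturation_iff {S : Set X} {x : X} :
    x ∈ saturation G X S ↔ ∃ g : G, ∃ s ∈ S, g • s = x := by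
  simp only [saturation, Set.mem_iUnion, Set.mem_smul_set]

/-- `f` is a slicing map for `S` with trivial structure group: it sends `g • s` to `g` for `s ∈ S`.
It is encoded as a function on all of `X`, whose values outside the saturation `G(S)` are
arbitrary. -/
def IsSlicingMap (S : Set X) (f : X → G) : Prop := ∀ (g : G) (s : X), s ∈ S → f (g • s) = g

theorem IsSlicingMap.transporter_eq_image_inter {S : Set X} {f : X → G} (hf : IsSlicingMap S f)
    (V : Set X) : transporter G X S V = f '' (V ∩ saturation G X S) := by
  ext g
  constructor
  · rintro ⟨_, ⟨s, hs, rfl⟩, hV⟩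
    exact ⟨g • s, ⟨hV, mem_saturation_iff.2 ⟨g, s, hs, rfl⟩⟩, hf g s hs⟩
  · rintro ⟨_, ⟨hV, hsat⟩, rfl⟩
    obtain ⟨h, s, hs, rfl⟩ := mem_saturation_iff.1 hsat
    rw [hf h s hs]
    exact ⟨h • s, Set.smul_mem_smul_set hs, hV⟩

theorem isSlicingMap_preimage_one (φ : X →[G] G) : IsSlicingMap (φ ⁻¹' {1}) φ := by
  intro g s hs
  rw [map_smul, Set.mem_singleton_iff.1 hs, smul_eq_mul, mul_one]

theorem saturation_preimage_one (φ : X →[G] G) : saturation G X (φ ⁻¹' {1}) = Set.univ := by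
  refine Set.eq_univ_of_forall fun x => mem_saturation_iff.2 ⟨φ x, (φ x)⁻¹ • x, ?_, ?_⟩
  · rw [Set.mem_preimage, map_smul, smul_eq_mul, inv_mul_cancel, Set.mem_singleton_iff]
  · exact smul_inv_smul _ _

variable [TopologicalSpace X]

theorem isGlobalSlice_bot_preimage_one (φ : X →[G] G) (hclosed : IsClosed (φ ⁻¹' {1})) :
    IsGlobalSlice G X ⊥ (φ ⁻¹' {1}) where
  left :=
    { invariant := by
        rintro _ rfl s hs
        rwa [one_smul]
      closed_in_saturation := by
        rw [hclosed.closure_eq]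
        exact Set.inter_subset_left
      mem_of_smul_inter := by
        rintro g ⟨_, ⟨s, hs, rfl⟩, hgs⟩
        rw [Subgroup.mem_bot, ← isSlicingMap_preimage_one φ g s hs]
        exact hgs
      open_saturation := by
        rw [saturation_preimage_one]
        exact isOpen_univ }
  right := saturation_preimage_one φ

variable [TopologicalSpace G]

theorem IsSlicingMap.isSmallSet_of_continuous [WeaklyLocallyCompactSpace G] [R1Space G]
    {S : Set X} {f : X → G} (hf : IsSlicingMap S f) (hcont : Continuous f) :
    IsSmallSet G X S := by
  intro x
  obtain ⟨K, hK, hKx⟩ := exists_compact_mem_nhds (f x)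
  refine ⟨f ⁻¹' K, hcont.continuousAt hKx, hK.closure_of_subset ?_⟩
  rw [hf.transporter_eq_image_inter]
  exact (Set.image_mono Set.inter_subset_left).trans (Set.image_preimage_subset f K)

theorem IsSmallSet.exists_mapClusterPt {S : Set X} (hS : IsSmallSet G X S) {f : X → G}
    (hf : IsSlicingMap S f) {ι : Type*} {l : Filter ι} [NeBot l] {u : ι → X} {x : X}
    (hux : Tendsto u l (𝓝 x)) (husat : ∀ᶠ i in l, u i ∈ saturation G X S) :
    ∃ g : G, MapClusterPt g l (f ∘ u) := by
  obtain ⟨V, hV, hcompact⟩ := hS x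
  have hmem : ∀ᶠ i in l, f (u i) ∈ closure (transporter G X S V) := by
    filter_upwards [hux hV, husat] with i hiV hisat
    rw [hf.transporter_eq_image_inter]
    exact subset_closure ⟨u i, ⟨hiV, hisat⟩, rfl⟩
  obtain ⟨g, -, hg⟩ := hcompact (tendsto_principal.2 hmem : map (f ∘ u) l ≤ _)
  exact ⟨g, hg⟩

end SlicingMap

theorem not_mapClusterPt_of_tendsto_zero {ι : Type*} {l : Filter ι} {u : ι → Rpos}
    (hu : Tendsto (fun i => (u i : ℝ)) l (𝓝 0)) (g : Rpos) : ¬ MapClusterPt g l u := by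
  intro hg
  have hg' : MapClusterPt (g : ℝ) l (fun i => (u i : ℝ)) :=
    hg.continuousAt_comp continuous_subtype_val.continuousAt
  have hneBot : NeBot (𝓝 (g : ℝ) ⊓ 𝓝 0) := hg'.clusterPt.mono hu
  exact g.2.ne' (eq_of_nhds_neBot hneBot)

theorem smul_coord (g : Rpos) (p : PlaneX) (i : Fin 2) : (g • p).1 i = g * p.1 i := rfl

theorem coord_zero_ne_or_coord_one_ne (p : PlaneX) : p.1 0 ≠ 0 ∨ p.1 1 ≠ 0 := by
  by_contra! h
  apply p.2
  ext i
  fin_cases i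
  exacts [h.1, h.2]

/-- The degree-one homogeneous function `X → ℝ_{>0}` whose level set at `1` is `hyperbolaSlice`:
it is `√|xy|` off the coordinate axes and the distance to the origin, written `|x| + |y|`, on
them. -/
def hyperbolaGauge : PlaneX →[Rpos] Rpos where
  toFun p := ⟨if p.1 0 * p.1 1 = 0 then |p.1 0| + |p.1 1| else √|p.1 0 * p.1 1|, by
    split_ifs with h
    · rcases coord_zero_ne_or_coord_one_ne p with h0 | h1 <;> positivity
    · positivity⟩
  map_smul' g p := by
    have hg : (0 : ℝ) < g := g.2
    have habs (i : Fin 2) : |(g • p).1 i| = g * |p.1 i| := by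
      rw [smul_coord, abs_mul, abs_of_pos hg]
    have hprod : (g • p).1 0 * (g • p).1 1 = (g : ℝ) ^ 2 * (p.1 0 * p.1 1) := by
      rw [smul_coord, smul_coord, mul_mul_mul_comm, sq]
    apply Subtype.ext
    simp only [hprod, habs, mul_eq_zero_iff_left (pow_pos hg 2).ne', id_eq, smul_eq_mul,
      Positive.val_mul]
    split_ifs
    · rw [mul_add]
    · rw [abs_mul, abs_of_pos (pow_pos hg 2), Real.sqrt_mul (sq_nonneg _), Real.sqrt_sq hg.le]

theorem coe_hyperbolaGauge (p : PlaneX) : (hyperbolaGauge p : ℝ) =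
    if p.1 0 * p.1 1 = 0 then |p.1 0| + |p.1 1| else √|p.1 0 * p.1 1| := rfl

theorem hyperbolaGauge_eq_one_iff (p : PlaneX) : hyperbolaGauge p = 1 ↔
    |p.1 0 * p.1 1| = 1 ∨ p.1 0 * p.1 1 = 0 ∧ |p.1 0| + |p.1 1| = 1 := by
  rw [← Subtype.coe_inj, coe_hyperbolaGauge, Positive.val_one]
  split_ifs with h
  · simp only [h, abs_zero, zero_ne_one, true_and, false_or]
  · simp only [h, Real.sqrt_eq_one, false_and, or_false]

theorem mem_hyperbolaSlice_iff (p : PlaneX) : p ∈ hyperbolaSlice ↔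
    |p.1 0 * p.1 1| = 1 ∨ p.1 0 * p.1 1 = 0 ∧ |p.1 0| + |p.1 1| = 1 := by
  rw [hyperbolaSlice, Set.mem_ofPred_eq]
  generalize p.1 0 = x
  generalize p.1 1 = y
  rcases eq_or_ne x 0 with rfl | hx
  · simp [abs_eq]
  · have hy : |x * y| = 1 ↔ y = 1 / x ∨ y = -(1 / x) := by
      rw [abs_eq zero_le_one, ← neg_div, eq_div_iff hx, eq_div_iff hx, mul_comm]
    have haxis : x * y = 0 ∧ |x| + |y| = 1 ↔ y = 0 ∧ (x = 1 ∨ x = -1) := by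
      rw [mul_eq_zero_iff_left hx, and_congr_right_iff]
      rintro rfl
      rw [abs_zero, add_zero, abs_eq zero_le_one]
    rw [hy, haxis]
    simp only [hx, ne_eq, not_false_eq_true, true_and, false_and, false_or]

theorem hyperbolaSlice_eq_preimage : hyperbolaSlice = hyperbolaGauge ⁻¹' {1} :=
  Set.ext fun p => (mem_hyperbolaSlice_iff p).trans (hyperbolaGauge_eq_one_iff p).symm

theorem isClosed_hyperbolaSlice : IsClosed hyperbolaSlice := by
  have hS : hyperbolaSlice = {p : PlaneX | |p.1 0 * p.1 1| = 1} ∪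
      {p : PlaneX | p.1 0 * p.1 1 = 0} ∩ {p : PlaneX | |p.1 0| + |p.1 1| = 1} :=
    Set.ext mem_hyperbolaSlice_iff
  rw [hS]
  refine .union ?_ (.inter ?_ ?_) <;> exact isClosed_eq (by fun_prop) (by fun_prop)

theorem isSlicingMap_hyperbolaGauge : IsSlicingMap hyperbolaSlice hyperbolaGauge := by
  rw [hyperbolaSlice_eq_preimage]
  exact isSlicingMap_preimage_one (G := Rpos) (X := PlaneX) hyperbolaGauge

theorem isGlobalSlice_hyperbolaSlice : IsGlobalSlice Rpos PlaneX ⊥ hyperbolaSlice := by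
  have hclosed := isClosed_hyperbolaSlice
  rw [hyperbolaSlice_eq_preimage] at hclosed ⊢
  exact isGlobalSlice_bot_preimage_one (G := Rpos) (X := PlaneX) hyperbolaGauge hclosed

/-- The parametrization `t ↦ (1, t)` of the line `x = 1`. As `t → 0⁺` it converges to
`(1, 0) ∈ hyperbolaSlice`, while its gauge tends to `0`. -/
def verticalLine (t : ℝ) : PlaneX :=
  ⟨!₂[1, t], fun h => one_ne_zero (congrArg (fun v : EuclideanSpace ℝ (Fin 2) => v 0) h)⟩

theorem continuous_verticalLine : Continuous verticalLine := by
  unfold verticalLine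
  fun_prop

theorem coe_hyperbolaGauge_verticalLine {t : ℝ} (ht : 0 < t) :
    (hyperbolaGauge (verticalLine t) : ℝ) = √t := by
  have hprod : (verticalLine t).1 0 * (verticalLine t).1 1 = t := one_mul t
  rw [coe_hyperbolaGauge, hprod, if_neg ht.ne', abs_of_pos ht]

theorem tendsto_hyperbolaGauge_verticalLine :
    Tendsto (fun t => (hyperbolaGauge (verticalLine t) : ℝ)) (𝓝[>] 0) (𝓝 0) := by
  have hsqrt : Tendsto (√·) (𝓝[>] 0) (𝓝 0) := by
    simpa only [Real.sqrt_zero] using (Real.continuous_sqrt.tendsto 0).mono_left nhdsWithin_le_nhds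
  refine hsqrt.congr' ?_
  filter_upwards [self_mem_nhdsWithin] with t ht
  exact (coe_hyperbolaGauge_verticalLine ht).symm

theorem not_isSmallSet_hyperbolaSlice : ¬ IsSmallSet Rpos PlaneX hyperbolaSlice := by
  intro hsmall
  have hpoint : Tendsto verticalLine (𝓝[>] 0) (𝓝 (verticalLine 0)) :=
    (continuous_verticalLine.tendsto 0).mono_left nhdsWithin_le_nhds
  have hsat (t : ℝ) : verticalLine t ∈ saturation Rpos PlaneX hyperbolaSlice := by
    rw [isGlobalSlice_hyperbolaSlice.2]
    exact Set.mem_univ _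
  obtain ⟨g, hg⟩ : ∃ g, MapClusterPt g (𝓝[>] 0) (hyperbolaGauge ∘ verticalLine) :=
    hsmall.exists_mapClusterPt isSlicingMap_hyperbolaGauge hpoint (.of_forall hsat)
  exact not_mapClusterPt_of_tendsto_zero tendsto_hyperbolaGauge_verticalLine g hg

/-- For the action of `G = ℝ_{>0}` on `X = ℝ² ∖ {0}` by scalar
multiplication, the set `S = {(x, ±1/x)} ∪ {(0, ±1), (±1, 0)}` is a global `H`-slice of
`X` for the trivial subgroup `H = {1}`, but `S` is not a small subset of `X`, and the
corresponding slicing map `f_S : X → G` (determined by `f_S(g • s) = g` for `s ∈ S`)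
is not continuous. -/
theorem hyperbola_slice_not_small :
    IsGlobalSlice Rpos PlaneX ⊥ hyperbolaSlice ∧
    ¬ IsSmallSet Rpos PlaneX hyperbolaSlice ∧
    ∀ f : PlaneX → Rpos,
      (∀ (g : Rpos) (s : PlaneX), s ∈ hyperbolaSlice → f (g • s) = g) →
      ¬ Continuous f := by
  refine ⟨isGlobalSlice_hyperbolaSlice, not_isSmallSet_hyperbolaSlice, ?_⟩
  intro f hf hcont
  have : LocallyCompactSpace Rpos := isOpen_Ioi.locallyCompactSpace
  have hslicing : IsSlicingMap hyperbolaSlice f := hf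
  exact not_isSmallSet_hyperbolaSlice (hslicing.isSmallSet_of_continuous hcont)

end
end

section
/- The set J(n) of all A ∈ 𝓑(n) for which the closed Euclidean unit ball 𝔹ⁿ is the maximal-volume ellipsoid contained in A (equivalently: 𝔹ⁿ ⊆ A and |det g| ≤ 1 for every g ∈ GL(n,ℝ) with g𝔹ⁿ ⊆ A) is a compact subset of 𝓑(n) with respect to the Hausdorff metric. -/
open scoped Pointwise
open TopologicalSpace

noncomputable section

/-- `ℝⁿ` with the Euclidean metric. -/
abbrev Euc (n : ℕ) := EuclideanSpace ℝ (Fin n)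

/-- `𝓑(n)`: the compact convex bodies of `ℝⁿ` symmetric about the origin, viewed inside
the hyperspace of nonempty compact subsets of `ℝⁿ` carrying the Hausdorff metric. -/
def BodySet (n : ℕ) : Set (NonemptyCompacts (Euc n)) :=
  {K | Convex ℝ (K : Set (Euc n)) ∧ (interior (K : Set (Euc n))).Nonempty ∧
       (K : Set (Euc n)) = -(K : Set (Euc n))}

/-- An element of `𝓑(n)`, with the (Hausdorff-metric) subspace topology. -/
abbrev Body (n : ℕ) := ↥(BodySet n)

/-- The underlying subset of `ℝⁿ` of a body `A ∈ 𝓑(n)`. -/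
def Body.toSet {n : ℕ} (A : Body n) : Set (Euc n) :=
  ((A : NonemptyCompacts (Euc n)) : Set (Euc n))

/-- The image `gA` of a subset `A ⊆ ℝⁿ` under the linear map determined by the matrix
`g`; in particular `g𝔹ⁿ` is the ellipsoid associated to `g ∈ GL(n,ℝ)`. -/
def matImage (n : ℕ) (g : Matrix (Fin n) (Fin n) ℝ) (A : Set (Euc n)) : Set (Euc n) :=
  (Matrix.toEuclideanLin g) '' A

/-- The closed Euclidean unit ball `𝔹ⁿ`. -/
def unitBall (n : ℕ) : Set (Euc n) := Metric.closedBall 0 1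

/-- `J(n)`: the bodies `A ∈ 𝓑(n)` for which `𝔹ⁿ` is the maximal-volume ellipsoid
contained in `A`, i.e. `𝔹ⁿ ⊆ A` and `|det g| ≤ 1` for every `g ∈ GL(n,ℝ)` with
`g𝔹ⁿ ⊆ A`. -/
def Jset (n : ℕ) : Set (Body n) :=
  {A | unitBall n ⊆ A.toSet ∧
       ∀ g : GL (Fin n) ℝ,
         matImage n (g : Matrix (Fin n) (Fin n) ℝ) (unitBall n) ⊆ A.toSet →
         |(g : Matrix (Fin n) (Fin n) ℝ).det| ≤ 1}

/-!
In dimension `n`, if `A` is in John position, then a linear map sending the unit ball into `c • A`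
has determinant at most `c ^ n` in absolute value, by rescaling. Compactness follows from this.

* If `x ∈ A` and `φ` is a norming functional of `x`, the map `u ↦ u + φ u • x` sends the ball into
  `A + A = 2 • A` and has determinant `1 + ‖x‖`. Hence `‖x‖ ≤ 2 ^ n`, and all these bodies lie in
  one compact hyperspace.
* If `A` is `ε`-close to `K`, then `K ⊆ A + ε • A = (1 + ε) • A`, because `A` contains the ball.
  Hence a map sending the ball into `K` has determinant at most `(1 + ε) ^ n`. Letting `ε` tend to
  `0` shows that John position passes to limits.
-/

section Hyperspace

instance nonemptyCompacts_orderClosedTopology {X : Type*} [TopologicalSpace X] [T2Space X] :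
    OrderClosedTopology (NonemptyCompacts X) where
  isClosed_le' := by
    simpa only [sup_eq_right] using isClosed_eq (continuous_sup (L := NonemptyCompacts X))
      continuous_snd

theorem isClosed_setOf_subset_nonemptyCompacts {X : Type*} [TopologicalSpace X] [T1Space X]
    (s : Set X) : IsClosed {K : NonemptyCompacts X | s ⊆ K} := by
  have hmeet (K : NonemptyCompacts X) : s ⊆ K ↔ ∀ x ∈ s, ((K : Set X) ∩ {x}).Nonempty := by
    simp only [Set.inter_singleton_nonempty, Set.subset_def]
  simp only [hmeet, Set.ofPred_forall]
  exact isClosed_biInter fun x _ =>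
    NonemptyCompacts.isClosed_inter_nonempty_of_isClosed isClosed_singleton

theorem isClosed_setOf_convex_nonemptyCompacts (𝕜 E : Type*) [Semiring 𝕜] [PartialOrder 𝕜]
    [AddCommMonoid E] [SMul 𝕜 E] [TopologicalSpace E] [T2Space E] [ContinuousAdd E]
    [ContinuousConstSMul 𝕜 E] :
    IsClosed {K : NonemptyCompacts E | Convex 𝕜 (K : Set E)} := by
  have hcomb (a b : 𝕜) : Continuous fun p : E × E => a • p.1 + b • p.2 := by fun_prop
  have hconvex (K : NonemptyCompacts E) : Convex 𝕜 (K : Set E) ↔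
      ∀ a b : 𝕜, 0 ≤ a → 0 ≤ b → a + b = 1 → (K ×ˢ K).map _ (hcomb a b) ≤ K := by
    refine ⟨fun h a b ha hb hab => ?_, fun h x hx y hy a b ha hb hab => ?_⟩
    · rintro _ ⟨⟨x, y⟩, ⟨hx, hy⟩, rfl⟩
      exact h hx hy ha hb hab
    · exact h a b ha hb hab ⟨(x, y), ⟨hx, hy⟩, rfl⟩
  simp only [hconvex, Set.ofPred_forall]
  exact isClosed_iInter fun a => isClosed_iInter fun b => isClosed_iInter fun _ =>
    isClosed_iInter fun _ => isClosed_iInter fun _ => isClosed_le (by fun_prop) continuous_id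

theorem isClosed_setOf_eq_neg_nonemptyCompacts (E : Type*) [InvolutiveNeg E] [TopologicalSpace E]
    [T2Space E] [ContinuousNeg E] :
    IsClosed {K : NonemptyCompacts E | (K : Set E) = -(K : Set E)} := by
  have hneg (K : NonemptyCompacts E) :
      (K : Set E) = -(K : Set E) ↔ K = K.map Neg.neg continuous_neg := by
    rw [← Set.image_neg_eq_neg, ← NonemptyCompacts.coe_map continuous_neg, SetLike.coe_set_eq]
  simp only [hneg]
  exact isClosed_eq continuous_id continuous_neg.nonemptyCompacts_map

theorem subset_thickening_of_dist_lt {X : Type*} [MetricSpace X] {K L : NonemptyCompacts X} {ε : ℝ}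
    (h : dist K L < ε) : (K : Set X) ⊆ Metric.thickening ε (L : Set X) := by
  intro x hx
  exact Metric.mem_thickening_iff.mpr <| Metric.exists_dist_lt_of_hausdorffDist_lt hx h <|
    Metric.hausdorffEDist_ne_top_of_nonempty_of_bounded K.nonempty L.nonempty
      K.isCompact.isBounded L.isCompact.isBounded

end Hyperspace

section JohnPosition

variable {E : Type*} [NormedAddCommGroup E] [NormedSpace ℝ E] {A : Set E}

theorem thickening_subset_smul_of_convex (hconv : Convex ℝ A) (hball : Metric.ball 0 1 ⊆ A)
    {ε : ℝ} (hε : 0 < ε) : Metric.thickening ε A ⊆ (1 + ε) • A :=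
  calc Metric.thickening ε A = A + ε • Metric.ball 0 1 := by
        rw [smul_unitBall_of_pos hε, add_ball_zero]
    _ ⊆ A + ε • A := by gcongr
    _ = (1 + ε) • A := by rw [hconv.add_smul zero_le_one hε.le, one_smul]

/-- `A` is in John position if it contains the unit ball and no linear image of the ball contained
in `A` has larger volume. All linear maps compete, since singular ones have determinant `0`. The
notion is meant for finite-dimensional `E`: otherwise `LinearMap.det` is constantly `1`. -/
def IsJohnPosition (A : Set E) : Prop :=
  Metric.closedBall 0 1 ⊆ A ∧
    ∀ f : E →ₗ[ℝ] E, Set.MapsTo f (Metric.closedBall 0 1) A → |LinearMap.det f| ≤ 1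

namespace IsJohnPosition

theorem abs_det_le_pow (hA : IsJohnPosition A) {c : ℝ} (hc : 0 < c) {f : E →ₗ[ℝ] E}
    (hf : Set.MapsTo f (Metric.closedBall 0 1) (c • A)) :
    |LinearMap.det f| ≤ c ^ Module.finrank ℝ E := by
  have hscaled : Set.MapsTo (c⁻¹ • f) (Metric.closedBall 0 1) A := fun u hu =>
    (Set.mem_smul_set_iff_inv_smul_mem₀ hc.ne' A (f u)).mp (hf hu)
  have hdet := hA.2 _ hscaled
  rwa [LinearMap.det_smul, abs_mul, abs_of_pos (by positivity), inv_pow,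
    inv_mul_le_one₀ (by positivity)] at hdet

theorem norm_le_two_pow [FiniteDimensional ℝ E] (hA : IsJohnPosition A) (hconv : Convex ℝ A)
    (hbal : Balanced ℝ A) {x : E} (hx : x ∈ A) : ‖x‖ ≤ 2 ^ Module.finrank ℝ E := by
  obtain ⟨φ, hφ, hφx⟩ := exists_dual_vector'' ℝ x
  have hmaps : Set.MapsTo (LinearMap.transvection φ.toLinearMap x) (Metric.closedBall 0 1)
      ((2 : ℝ) • A) := by
    intro u hu
    have hφu : ‖φ u‖ ≤ 1 :=
      φ.le_of_opNorm_le_of_le hφ (mem_closedBall_zero_iff.mp hu) |>.trans_eq (one_mul 1)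
    rw [← one_add_one_eq_two, hconv.add_smul zero_le_one zero_le_one, one_smul]
    exact Set.add_mem_add (hA.1 hu) (hbal.smul_mem hφu hx)
  have hdet : LinearMap.det (LinearMap.transvection φ.toLinearMap x) = 1 + ‖x‖ := by
    simpa using hφx
  calc ‖x‖ ≤ |1 + ‖x‖| := by rw [abs_of_nonneg (by positivity)]; linarith
    _ ≤ 2 ^ Module.finrank ℝ E := hdet ▸ hA.abs_det_le_pow two_pos hmaps

end IsJohnPosition

variable (E) in
theorem isClosed_setOf_convex_isJohnPosition :
    IsClosed {K : NonemptyCompacts E | Convex ℝ (K : Set E) ∧ IsJohnPosition (K : Set E)} := by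
  refine isClosed_of_closure_subset fun K hK => ⟨?_, ?_, fun f hf => ?_⟩
  · exact closure_minimal (fun _ hA => hA.1) (isClosed_setOf_convex_nonemptyCompacts ℝ E) hK
  · exact closure_minimal (fun _ hA => hA.2.1) (isClosed_setOf_subset_nonemptyCompacts _) hK
  · have hdet : ∀ ε > (0 : ℝ), |LinearMap.det f| ≤ (1 + ε) ^ Module.finrank ℝ E := by
      intro ε hε
      obtain ⟨A, ⟨hconv, hA⟩, hKA⟩ := Metric.mem_closure_iff.mp hK ε hε
      have hsub : (K : Set E) ⊆ (1 + ε) • (A : Set E) :=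
        (subset_thickening_of_dist_lt hKA).trans <|
          thickening_subset_smul_of_convex hconv (Metric.ball_subset_closedBall.trans hA.1) hε
      exact hA.abs_det_le_pow (by positivity) (hf.mono_right hsub)
    have hlim : Filter.Tendsto (fun ε : ℝ => (1 + ε) ^ Module.finrank ℝ E)
        (nhdsWithin 0 (Set.Ioi 0)) (nhds 1) := by
      have hcont : Continuous fun ε : ℝ => (1 + ε) ^ Module.finrank ℝ E := by fun_prop
      simpa using (hcont.tendsto 0).mono_left nhdsWithin_le_nhds
    exact ge_of_tendsto hlim (Filter.eventually_of_mem self_mem_nhdsWithin hdet)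

end JohnPosition

theorem Jset_isCompact_general (E : Type*) [NormedAddCommGroup E] [NormedSpace ℝ E]
    [FiniteDimensional ℝ E] :
    IsCompact {K : NonemptyCompacts E |
      (K : Set E) = -(K : Set E) ∧ Convex ℝ (K : Set E) ∧ IsJohnPosition (K : Set E)} := by
  have : ProperSpace E := FiniteDimensional.proper_real E
  refine (NonemptyCompacts.isCompact_subsets_of_isCompact
    (isCompact_closedBall (0 : E) (2 ^ Module.finrank ℝ E))).of_isClosed_subset ?_ ?_
  · exact (isClosed_setOf_eq_neg_nonemptyCompacts E).inter
      (isClosed_setOf_convex_isJohnPosition E)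
  · rintro K ⟨hneg, hconv, hK⟩ x hx
    have hbal : Balanced ℝ (K : Set E) :=
      (balanced_iff_neg_mem hconv).mpr fun y hy => by rwa [hneg, Set.neg_mem_neg]
    exact mem_closedBall_zero_iff.mpr (hK.norm_le_two_pow hconv hbal hx)

theorem isJohnPosition_iff_forall_GL {n : ℕ} {A : Set (Euc n)} :
    IsJohnPosition A ↔ unitBall n ⊆ A ∧ ∀ g : GL (Fin n) ℝ,
      matImage n (g : Matrix (Fin n) (Fin n) ℝ) (unitBall n) ⊆ A →
        |(g : Matrix (Fin n) (Fin n) ℝ).det| ≤ 1 := by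
  refine and_congr_right' ⟨fun h g hg => ?_, fun h f hf => ?_⟩
  · simpa only [LinearMap.det_toLpLin] using h _ (Set.mapsTo_iff_image_subset.mpr hg)
  · obtain ⟨M, rfl⟩ := Matrix.toEuclideanLin.surjective f
    rw [LinearMap.det_toLpLin]
    by_cases hM : M.det = 0
    · simp [hM]
    · exact h (.mkOfDetNeZero M hM) hf.image_subset

theorem image_val_Jset (n : ℕ) :
    Subtype.val '' Jset n = {K : NonemptyCompacts (Euc n) |
      (K : Set (Euc n)) = -(K : Set (Euc n)) ∧ Convex ℝ (K : Set (Euc n)) ∧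
        IsJohnPosition (K : Set (Euc n))} := by
  ext K
  constructor
  · rintro ⟨A, hA, rfl⟩
    exact ⟨A.2.2.2, A.2.1, isJohnPosition_iff_forall_GL.mpr hA⟩
  · rintro ⟨hneg, hconv, hK⟩
    have hint : (interior (K : Set (Euc n))).Nonempty :=
      ⟨0, interior_mono hK.1 <|
        Metric.ball_subset_interior_closedBall (Metric.mem_ball_self one_pos)⟩
    exact ⟨⟨K, hconv, hint, hneg⟩, isJohnPosition_iff_forall_GL.mp hK, rfl⟩

/-- `J(n)` is a compact subset of `𝓑(n)` with respect to the
Hausdorff metric. -/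
theorem Jset_isCompact (n : ℕ) : IsCompact (Jset n) := by
  rw [Subtype.isCompact_iff, image_val_Jset]
  exact Jset_isCompact_general (Euc n)

end
end

section
/- The orbit space 𝓑(n)/GL(n,ℝ) of the natural GL(n,ℝ)-action on 𝓑(n) is homeomorphic to the orbit space J(n)/O(n) of the restricted O(n)-action on J(n); the homeomorphism is induced by the inclusion J(n) ↪ 𝓑(n). -/
open scoped Pointwise
open TopologicalSpace

noncomputable section

/-- The orbit relation of the natural `GL(n,ℝ)`-action `g·A = gA` on `𝓑(n)`;
the quotient `Quot (glOrbitRel n)` is the orbit space `𝓑(n)/GL(n,ℝ)`. -/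
def glOrbitRel (n : ℕ) : Body n → Body n → Prop :=
  fun A B => ∃ g : GL (Fin n) ℝ, matImage n (g : Matrix (Fin n) (Fin n) ℝ) A.toSet = B.toSet

/-- The orbit relation of the restricted `O(n)`-action on `J(n)`;
the quotient `Quot (onOrbitRel n)` is the orbit space `J(n)/O(n)`. -/
def onOrbitRel (n : ℕ) : ↥(Jset n) → ↥(Jset n) → Prop :=
  fun A B => ∃ g ∈ Matrix.orthogonalGroup (Fin n) ℝ,
    matImage n g (A : Body n).toSet = (B : Body n).toSet

/-!
The `GL(n,ℝ)`-action on `𝓑(n)` is continuous, `J(n)` is closed, and `J(n)` meets every orbit,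
because the ellipsoids contained in a body form a compact set on which `|det|` has a maximum.
If `A ∈ J(n)` and `gA` is close to a fixed body, then `gA` is squeezed between two balls of fixed
radii, which bounds `‖g‖` above and `|det g|` below, so `g` lies in a fixed compact set. Hence
`GL(n,ℝ) × J(n) → 𝓑(n)` is a proper surjection, and `J(n) → 𝓑(n)/GL(n,ℝ)` is a quotient map.

Its fibres are the `O(n)`-orbits because the maximal ellipsoid is unique: up to a rotation a second
one is `P𝔹ⁿ` with `P` positive definite and `det P = 1`, and unless `P = 1` the ellipsoid of
`(P + 1) / 2`, which is also contained in the body, has determinant larger than `1`.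
-/

open Filter Set Topology Metric Bornology
open scoped ComplexOrder MatrixOrder Matrix.Norms.L2Operator

section Slice

variable {G X : Type*} [Group G] [TopologicalSpace G] [TopologicalSpace X] [MulAction G X]
  {S : Set X}

theorem isProperMap_smul_of_isClosed [ContinuousInv G] [ContinuousSMul G X] (hS : IsClosed S)
    (hK : ∀ x : X, ∃ K : Set G, IsCompact K ∧ ∀ᶠ y in 𝓝 x, ∀ g : G, g⁻¹ • y ∈ S → g ∈ K) :
    IsProperMap fun p : G × S => p.1 • (p.2 : X) := by
  refine isProperMap_iff_ultrafilter.2 ⟨by fun_prop, fun 𝒰 x h𝒰 => ?_⟩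
  obtain ⟨K, hKc, hKx⟩ := hK x
  have hfst : ∀ᶠ p in (𝒰 : Filter (G × S)), p.1 ∈ K :=
    (h𝒰.eventually hKx).mono fun p hp => hp p.1 (by simp)
  obtain ⟨g, -, hg⟩ := hKc.ultrafilter_le_nhds' (𝒰.map Prod.fst) hfst
  have htendsto_fst : Tendsto Prod.fst (𝒰 : Filter (G × S)) (𝓝 g) := hg
  have htendsto_snd : Tendsto (fun p => (p.2 : X)) (𝒰 : Filter (G × S)) (𝓝 (g⁻¹ • x)) := by
    simpa using htendsto_fst.inv.smul h𝒰
  have hgx : g⁻¹ • x ∈ S := hS.mem_of_tendsto htendsto_snd (.of_forall fun p => p.2.2)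
  refine ⟨(g, ⟨g⁻¹ • x, hgx⟩), by simp, ?_⟩
  exact htendsto_fst.prodMk_nhds (tendsto_subtype_rng.2 htendsto_snd)

theorem isQuotientMap_orbit_mk_of_isQuotientMap_smul
    (hS : IsQuotientMap fun p : G × S => p.1 • (p.2 : X)) :
    IsQuotientMap fun s : S => (⟦(s : X)⟧ : MulAction.orbitRel.Quotient G X) := by
  have hmk : Continuous fun s : S => (⟦(s : X)⟧ : MulAction.orbitRel.Quotient G X) :=
    continuous_quotient_mk'.comp continuous_subtype_val
  have hcomp : IsQuotientMap
      ((fun s : S => (⟦(s : X)⟧ : MulAction.orbitRel.Quotient G X)) ∘ (Prod.snd : G × S → S)) := by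
    convert isQuotientMap_quotient_mk'.comp hS using 1
    funext p
    exact (Quotient.sound (MulAction.orbitRel_apply.2 ⟨p.1, rfl⟩)).symm
  exact .of_comp continuous_snd hmk hcomp

theorem exists_homeomorph_orbitRel_quotient [ContinuousInv G] [ContinuousSMul G X]
    {r : S → S → Prop} (hr : ∀ a b, r a b ↔ MulAction.orbitRel G X (a : X) b)
    (hS : IsClosed S) (hmeet : ∀ x : X, ∃ g : G, g • x ∈ S)
    (hK : ∀ x : X, ∃ K : Set G, IsCompact K ∧ ∀ᶠ y in 𝓝 x, ∀ g : G, g⁻¹ • y ∈ S → g ∈ K) :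
    ∃ φ : Quot r ≃ₜ MulAction.orbitRel.Quotient G X, ∀ a : S, φ (Quot.mk r a) = ⟦(a : X)⟧ := by
  have hproper := isProperMap_smul_of_isClosed hS hK
  have hsurj : Function.Surjective fun p : G × S => p.1 • (p.2 : X) := fun x => by
    obtain ⟨g, hg⟩ := hmeet x
    exact ⟨(g⁻¹, ⟨g • x, hg⟩), by simp⟩
  have hquot := isQuotientMap_orbit_mk_of_isQuotientMap_smul
    (hproper.isClosedMap.isQuotientMap hproper.continuous hsurj)
  obtain rfl : r = (Setoid.ker fun s : S => (⟦(s : X)⟧ : MulAction.orbitRel.Quotient G X)).r := by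
    funext a b
    exact propext ((hr a b).trans Quotient.eq.symm)
  let f : C(S, MulAction.orbitRel.Quotient G X) := ⟨_, hquot.continuous⟩
  exact ⟨IsQuotientMap.homeomorph (f := f) hquot, fun _ => rfl⟩

end Slice

section Convex

theorem singleton_natCast_smul_add_subset {E : Type*} [AddCommGroup E] [Module ℝ E]
    {a : E} {B C : Set E} (hB : Convex ℝ B) (hB' : B.Nonempty) (h : {a} + C ⊆ B + C) (n : ℕ) :
    {(n : ℝ) • a} + C ⊆ (n : ℝ) • B + C := by
  induction n with
  | zero => simp [zero_smul_set hB']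
  | succ n ih =>
    calc {((n + 1 : ℕ) : ℝ) • a} + C = {(n : ℝ) • a} + ({a} + C) := by
          rw [← add_assoc, singleton_add_singleton, Nat.cast_succ, add_smul, one_smul]
      _ ⊆ {(n : ℝ) • a} + (B + C) := by gcongr
      _ = B + ({(n : ℝ) • a} + C) := add_left_comm _ _ _
      _ ⊆ B + ((n : ℝ) • B + C) := by gcongr
      _ = ((n + 1 : ℕ) : ℝ) • B + C := by
          rw [← add_assoc, add_comm B, Nat.cast_succ, hB.add_smul n.cast_nonneg zero_le_one,
            one_smul]

theorem zero_mem_interior_of_convex_of_neg_eq {E : Type*} [AddCommGroup E] [Module ℝ E]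
    [TopologicalSpace E] [IsTopologicalAddGroup E] [ContinuousSMul ℝ E] {A : Set E}
    (hA : Convex ℝ A) (hA' : -A = A) (hne : (interior A).Nonempty) : (0 : E) ∈ interior A := by
  obtain ⟨x, hx⟩ := hne
  have hneg : -interior A ⊆ interior A :=
    interior_maximal ((neg_subset_neg.2 interior_subset).trans_eq hA') isOpen_interior.neg
  have hx' : -x ∈ interior A := hneg (neg_mem_neg.2 hx)
  simpa using hA.interior.midpoint_mem hx hx'

variable {E : Type*} [NormedAddCommGroup E] [NormedSpace ℝ E]

-- Rådström cancellation: `a + C ⊆ B + C` iterates to `n • a + C ⊆ n • B + C`; divide by `n`.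
theorem subset_closure_of_add_subset_add {A B C : Set E} (hB : Convex ℝ B) (hC : IsBounded C)
    (hC' : C.Nonempty) (h : A + C ⊆ B + C) : A ⊆ closure B := by
  intro a ha
  obtain ⟨c, hc⟩ := hC'
  have haC : {a} + C ⊆ B + C := (add_subset_add_right (singleton_subset_iff.2 ha)).trans h
  have hB' : B.Nonempty := (h (add_mem_add ha hc)).imp fun _ hb => hb.1
  have hiter : ∀ n : ℕ, ∃ b ∈ B, ∃ c' ∈ C,
      ((n + 1 : ℕ) : ℝ) • b + c' = ((n + 1 : ℕ) : ℝ) • a + c := fun n => by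
    obtain ⟨_, ⟨b, hb, rfl⟩, c', hc', hbc⟩ :=
      singleton_natCast_smul_add_subset hB hB' haC (n + 1) (add_mem_add rfl hc)
    exact ⟨b, hb, c', hc', hbc⟩
  choose b hb c' hc' hbc using hiter
  have hb_eq : ∀ n : ℕ, a + (1 / ((n : ℝ) + 1)) • (c - c' n) = b n := fun n => by
    have hn : (n : ℝ) + 1 ≠ 0 := by positivity
    have hbc_n : ((n : ℝ) + 1) • b n + c' n = ((n : ℝ) + 1) • a + c := mod_cast hbc n
    rw [one_div, eq_comm, ← sub_eq_iff_eq_add', eq_inv_smul_iff₀ hn, smul_sub,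
      sub_eq_sub_iff_add_eq_add, hbc_n, add_comm]
  obtain ⟨R, hR⟩ := hC.exists_norm_le
  have hbdd : IsBoundedUnder (· ≤ ·) atTop fun n => ‖c - c' n‖ :=
    isBoundedUnder_of ⟨R + R, fun n => norm_sub_le_of_le (hR c hc) (hR _ (hc' n))⟩
  have hlim : Tendsto b atTop (𝓝 a) := by
    have := (tendsto_one_div_add_atTop_nhds_zero_nat (𝕜 := ℝ)).zero_smul_isBoundedUnder_le hbdd
    simpa only [hb_eq, add_zero] using this.const_add a
  exact mem_closure_of_tendsto hlim (.of_forall hb)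

theorem eventually_subset_of_subset_interior {A : NonemptyCompacts E} {K : Set E}
    (hK : IsCompact K) (hKA : K ⊆ interior (A : Set E)) :
    ∀ᶠ B : NonemptyCompacts E in 𝓝 A, Convex ℝ (B : Set E) → K ⊆ B := by
  obtain ⟨δ, hδ, h⟩ := hK.exists_thickening_subset_open isOpen_interior hKA
  rw [← add_ball_zero] at h
  filter_upwards [ball_mem_nhds A hδ] with B hBA hB
  have hAB : (A : Set E) ⊆ (B : Set E) + ball 0 δ := fun x hx => by
    rw [mem_ball', NonemptyCompacts.dist_eq] at hBA
    obtain ⟨y, hy, hxy⟩ := exists_dist_lt_of_hausdorffDist_lt hx hBA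
      (hausdorffEDist_ne_top_of_nonempty_of_bounded A.nonempty B.nonempty
        A.isCompact.isBounded B.isCompact.isBounded)
    exact ⟨y, hy, x - y, by simpa [dist_eq_norm] using hxy, add_sub_cancel _ _⟩
  rw [← B.isCompact.isClosed.closure_eq]
  exact subset_closure_of_add_subset_add hB isBounded_ball (nonempty_ball.2 hδ)
    ((h.trans interior_subset).trans hAB)

theorem isClosed_setOf_subset {α : Type*} [TopologicalSpace α] [T1Space α] (s : Set α) :
    IsClosed {K : NonemptyCompacts α | s ⊆ K} := by
  have : {K : NonemptyCompacts α | s ⊆ K} =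
      ⋂ x ∈ s, {K : NonemptyCompacts α | ((K : Set α) ∩ {x}).Nonempty} := by
    ext; simp [subset_def]
  rw [this]
  exact isClosed_biInter fun x _ =>
    NonemptyCompacts.isClosed_inter_nonempty_of_isClosed isClosed_singleton

end Convex

section Matrix

variable {𝕜 ι : Type*} [RCLike 𝕜] [Fintype ι] [DecidableEq ι]

theorem exists_posDef_mul_unitary {g : Matrix ι ι 𝕜} (hg : IsUnit g) :
    ∃ P : Matrix ι ι 𝕜, P.PosDef ∧ ∃ U ∈ Matrix.unitaryGroup ι 𝕜, g = P * U := by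
  set P := CFC.sqrt (g * star g)
  have hPP : P * P = g * star g := CFC.sqrt_mul_sqrt_self _ (mul_star_self_nonneg g)
  have hP : 0 ≤ P := CFC.sqrt_nonneg _
  have hPu : IsUnit P := isUnit_of_mul_isUnit_left (hPP ▸ hg.mul hg.star)
  have hinv : P⁻¹ * P = 1 := Matrix.nonsing_inv_mul P ((Matrix.isUnit_iff_isUnit_det P).1 hPu)
  have hinv' : P * P⁻¹ = 1 := mul_eq_one_comm.1 hinv
  have hstar : star P⁻¹ = P⁻¹ := (Matrix.nonneg_iff_posSemidef.1 hP).isHermitian.inv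
  refine ⟨P, Matrix.isStrictlyPositive_iff_posDef.1 ⟨hP, hPu⟩, P⁻¹ * g, ?_, ?_⟩
  · rw [Matrix.mem_unitaryGroup_iff]
    calc P⁻¹ * g * star (P⁻¹ * g) = P⁻¹ * (g * star g) * P⁻¹ := by
          rw [star_mul, hstar]; simp only [mul_assoc]
      _ = P⁻¹ * P * (P * P⁻¹) := by rw [← hPP]; simp only [mul_assoc]
      _ = 1 := by rw [hinv, hinv', one_mul]
  · rw [← mul_assoc, hinv', one_mul]

theorem det_conjStarAlgAut {R : Type*} [CommRing R] [StarRing R] (U : Matrix.unitaryGroup ι R)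
    (M : Matrix ι ι R) : (Unitary.conjStarAlgAut R (Matrix ι ι R) U M).det = M.det := by
  rw [Unitary.conjStarAlgAut_apply, Matrix.det_mul_right_comm, Unitary.mul_star_self_of_mem U.2,
    one_mul]

theorem det_midpoint_one {P : Matrix ι ι ℝ} (hP : P.IsHermitian) :
    (midpoint ℝ P 1).det = ∏ i, midpoint ℝ (hP.eigenvalues i) 1 := by
  set Φ := Unitary.conjStarAlgAut ℝ _ hP.eigenvectorUnitary
  have hspec : P = Φ (Matrix.diagonal hP.eigenvalues) := hP.spectral_theorem
  have hmid : midpoint ℝ P 1 = Φ (Matrix.diagonal fun i => midpoint ℝ (hP.eigenvalues i) 1) := by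
    conv_lhs => rw [hspec, ← map_one Φ]
    rw [← Matrix.diagonal_one]
    simp only [midpoint_eq_smul_add, ← map_add, ← map_smul, Matrix.diagonal_add,
      ← Matrix.diagonal_smul]
    rfl
  rw [hmid, det_conjStarAlgAut, Matrix.det_diagonal]

theorem det_lt_sq_det_midpoint_one {P : Matrix ι ι ℝ} (hP : P.PosDef) (hP1 : P ≠ 1) :
    P.det < (midpoint ℝ P 1).det ^ 2 := by
  obtain ⟨i, hi⟩ : ∃ i, hP.isHermitian.eigenvalues i ≠ 1 := by
    contrapose! hP1
    rw [hP.isHermitian.spectral_theorem, funext hP1]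
    simp
  have hsq (x : ℝ) : midpoint ℝ x 1 ^ 2 = x + ((x - 1) / 2) ^ 2 := by
    rw [midpoint_eq_smul_add, smul_eq_mul, invOf_eq_inv]
    ring
  have hle (x : ℝ) : x ≤ midpoint ℝ x 1 ^ 2 := by
    rw [hsq]
    exact le_add_of_nonneg_right (sq_nonneg _)
  have hlt {x : ℝ} (hx : x ≠ 1) : x < midpoint ℝ x 1 ^ 2 := by
    rw [hsq]
    have : x - 1 ≠ 0 := sub_ne_zero.2 hx
    exact lt_add_of_pos_right _ (by positivity)
  calc P.det = ∏ i, hP.isHermitian.eigenvalues i := by simp [hP.isHermitian.det_eq_prod_eigenvalues]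
    _ < ∏ i, midpoint ℝ (hP.isHermitian.eigenvalues i) 1 ^ 2 :=
      Finset.prod_lt_prod (fun i _ => hP.eigenvalues_pos i) (fun i _ => hle _)
        ⟨i, Finset.mem_univ i, hlt hi⟩
    _ = (midpoint ℝ P 1).det ^ 2 := by rw [det_midpoint_one hP.isHermitian, Finset.prod_pow]

theorem norm_le_one_of_mem_unitaryGroup {U : Matrix ι ι 𝕜}
    (hU : U ∈ Matrix.unitaryGroup ι 𝕜) : ‖U‖ ≤ 1 := by
  nontriviality Matrix ι ι 𝕜
  exact (CStarRing.norm_of_mem_unitary hU).le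

theorem isCompact_setOf_norm_le_and_le_norm_det (R : ℝ) {c : ℝ} (hc : 0 < c) :
    IsCompact {g : GL ι 𝕜 | ‖(g : Matrix ι ι 𝕜)‖ ≤ R ∧ c ≤ ‖(g : Matrix ι ι 𝕜).det‖} := by
  have : ProperSpace (Matrix ι ι 𝕜) := FiniteDimensional.proper 𝕜 _
  let s : Set (Matrix ι ι 𝕜) := {g | ‖g‖ ≤ R ∧ c ≤ ‖g.det‖}
  have hs : IsCompact s := by
    refine (isCompact_closedBall 0 R).of_isClosed_subset ?_ fun g hg => by simpa using hg.1
    exact (isClosed_le continuous_norm continuous_const).inter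
      (isClosed_le continuous_const (continuous_id.matrix_det.norm))
  refine (Units.isOpenEmbedding_val.isInducing.isCompact_preimage_iff fun g hg => ?_).2 hs
  have hdet : g.det ≠ 0 := norm_pos_iff.1 (hc.trans_le hg.2)
  exact (Matrix.isUnit_iff_isUnit_det g).2 hdet.isUnit

theorem abs_det_val_inv (g : GL ι ℝ) :
    |(g⁻¹ : GL ι ℝ).val.det| = |g.val.det|⁻¹ := by
  rw [Matrix.coe_units_inv, Matrix.det_nonsing_inv, Ring.inverse_eq_inv', abs_inv]

end Matrix

section Ellipsoid

variable {n : ℕ}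

theorem matImage_one (A : Set (Euc n)) : matImage n 1 A = A := by
  simp [matImage, Matrix.toLpLin_one]

theorem matImage_mul (g h : Matrix (Fin n) (Fin n) ℝ) (A : Set (Euc n)) :
    matImage n (g * h) A = matImage n g (matImage n h A) := by
  simp [matImage, image_image, Matrix.toLpLin_apply]

theorem matImage_mono (g : Matrix (Fin n) (Fin n) ℝ) {A B : Set (Euc n)} (h : A ⊆ B) :
    matImage n g A ⊆ matImage n g B :=
  image_mono h

theorem continuous_toEuclideanLin_apply {𝕜 m n : Type*} [RCLike 𝕜] [Finite m] [Fintype n]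
    [DecidableEq n] :
    Continuous fun p : Matrix m n 𝕜 × EuclideanSpace 𝕜 n => Matrix.toEuclideanLin p.1 p.2 := by
  simp only [Matrix.toLpLin_apply]
  fun_prop

/-- The ellipsoids `g𝔹ⁿ` contained in `A`, represented by their matrices `g`; singular `g` are
allowed, so that this set is compact and convex when `A` is. -/
def ellipsoidsIn (A : Set (Euc n)) : Set (Matrix (Fin n) (Fin n) ℝ) :=
  {g | matImage n g (unitBall n) ⊆ A}

theorem mem_ellipsoidsIn {A : Set (Euc n)} {g : Matrix (Fin n) (Fin n) ℝ} :
    g ∈ ellipsoidsIn A ↔ ∀ x ∈ closedBall 0 1, Matrix.toEuclideanLin g x ∈ A :=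
  image_subset_iff

theorem ellipsoidsIn_mono {A B : Set (Euc n)} (h : A ⊆ B) : ellipsoidsIn A ⊆ ellipsoidsIn B :=
  fun _ hg => hg.trans h

theorem ellipsoidsIn_eq_iInter (A : Set (Euc n)) :
    ellipsoidsIn A = ⋂ x ∈ closedBall 0 1, {g | Matrix.toEuclideanLin g x ∈ A} := by
  ext g
  simp [mem_ellipsoidsIn]

theorem ellipsoidsIn_closedBall {R : ℝ} (hR : 0 ≤ R) :
    ellipsoidsIn (closedBall (0 : Euc n) R) = closedBall 0 R := by
  ext g
  simp only [mem_ellipsoidsIn, mem_closedBall_zero_iff]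
  refine ⟨fun hg => ?_, fun hg x hx => ?_⟩
  · rw [Matrix.l2_opNorm_def]
    exact ContinuousLinearMap.opNorm_le_of_unit_norm hR fun x hx => hg x hx.le
  · calc ‖Matrix.toEuclideanLin g x‖ ≤ ‖g‖ * ‖x‖ := Matrix.l2_opNorm_mulVec g x
      _ ≤ R * 1 := by gcongr
      _ = R := mul_one R

theorem convex_ellipsoidsIn {A : Set (Euc n)} (hA : Convex ℝ A) : Convex ℝ (ellipsoidsIn A) := by
  rw [ellipsoidsIn_eq_iInter]
  exact convex_iInter₂ fun x _ =>
    hA.linear_preimage ((LinearMap.applyₗ x).comp Matrix.toEuclideanLin.toLinearMap)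

theorem isCompact_ellipsoidsIn {A : Set (Euc n)} (hA : IsCompact A) :
    IsCompact (ellipsoidsIn A) := by
  have : ProperSpace (Matrix (Fin n) (Fin n) ℝ) := FiniteDimensional.proper ℝ _
  have hclosed : IsClosed (ellipsoidsIn A) := by
    rw [ellipsoidsIn_eq_iInter]
    exact isClosed_biInter fun x _ => hA.isClosed.preimage
      (continuous_toEuclideanLin_apply.comp (continuous_id.prodMk continuous_const))
  obtain ⟨R, hR, hAR⟩ := hA.isBounded.subset_closedBall_lt 0 0
  refine (isCompact_closedBall 0 R).of_isClosed_subset hclosed ?_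
  exact (ellipsoidsIn_mono hAR).trans (ellipsoidsIn_closedBall hR.le).subset

theorem mul_mem_ellipsoidsIn_of_mem_orthogonalGroup {A : Set (Euc n)}
    {g U : Matrix (Fin n) (Fin n) ℝ} (hg : g ∈ ellipsoidsIn A)
    (hU : U ∈ Matrix.orthogonalGroup (Fin n) ℝ) : g * U ∈ ellipsoidsIn A := by
  have hU_ball : U ∈ ellipsoidsIn (unitBall n) := by
    rw [unitBall, ellipsoidsIn_closedBall zero_le_one, mem_closedBall_zero_iff]
    exact norm_le_one_of_mem_unitaryGroup hU
  exact (matImage_mul g U _).trans_subset ((matImage_mono g hU_ball).trans hg)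

theorem smul_one_mem_ellipsoidsIn {A : Set (Euc n)} {r : ℝ} (hr : 0 ≤ r)
    (hA : closedBall 0 r ⊆ A) : r • 1 ∈ ellipsoidsIn A := by
  refine ellipsoidsIn_mono hA ?_
  rw [ellipsoidsIn_closedBall hr, mem_closedBall_zero_iff, norm_smul, Real.norm_of_nonneg hr]
  exact mul_le_of_le_one_right hr (norm_le_one_of_mem_unitaryGroup (one_mem _))

end Ellipsoid

section Action

variable {n : ℕ}

namespace Body

theorem isCompact (A : Body n) : IsCompact A.toSet := A.1.isCompact

theorem convex (A : Body n) : Convex ℝ A.toSet := A.2.1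

theorem zero_mem_interior (A : Body n) : (0 : Euc n) ∈ interior A.toSet :=
  zero_mem_interior_of_convex_of_neg_eq A.convex A.2.2.2.symm A.2.2.1

theorem ext {A B : Body n} (h : A.toSet = B.toSet) : A = B :=
  Subtype.ext (NonemptyCompacts.ext h)

theorem map_toEuclideanLin_mem_bodySet (g : GL (Fin n) ℝ) (A : Body n) :
    A.1.map (Matrix.toEuclideanLin g.val) (LinearMap.continuous_of_finiteDimensional _) ∈
      BodySet n := by
  refine ⟨A.convex.linear_image _, ?_, ?_⟩
  · have hsurj : Function.Surjective (Matrix.toEuclideanLin g.val) := fun x =>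
      ⟨Matrix.toEuclideanLin g⁻¹.val x, by simp [Matrix.toLpLin_apply]⟩
    exact (A.2.2.1.image _).mono
      ((LinearMap.isOpenMap_of_finiteDimensional _ hsurj).image_interior_subset _)
  · have hneg : A.toSet = -A.toSet := A.2.2.2
    change _ '' A.toSet = -(_ '' A.toSet)
    conv_lhs => rw [hneg]
    exact image_neg_of_apply_neg_eq_neg fun x _ => map_neg _ x

/-- The natural action `g • A = gA`. -/
instance : MulAction (GL (Fin n) ℝ) (Body n) where
  smul g A := ⟨_, map_toEuclideanLin_mem_bodySet g A⟩
  one_smul _ := ext (matImage_one _)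
  mul_smul _ _ _ := ext (matImage_mul _ _ _)

instance : ContinuousSMul (GL (Fin n) ℝ) (Body n) where
  continuous_smul := by
    refine Continuous.subtype_mk (Continuous.nonemptyCompacts_map' ?_ ?_) _
    · fun_prop
    · have hval : Continuous fun p : (GL (Fin n) ℝ × Body n) × Euc n => p.1.1.val :=
        Units.continuous_val.comp (continuous_fst.comp continuous_fst)
      exact continuous_toEuclideanLin_apply.comp (hval.prodMk continuous_snd)

end Body

theorem glOrbitRel_iff {A B : Body n} :
    glOrbitRel n A B ↔ MulAction.orbitRel (GL (Fin n) ℝ) (Body n) A B := by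
  rw [MulAction.orbitRel_apply, MulAction.mem_orbit_symm]
  exact exists_congr fun g => ⟨fun h => Body.ext h, fun h => congrArg Body.toSet h⟩

end Action

section John

variable {n : ℕ}

theorem mul_mem_ellipsoidsIn_smul_iff (g : GL (Fin n) ℝ) {h : Matrix (Fin n) (Fin n) ℝ}
    {A : Body n} : g.val * h ∈ ellipsoidsIn (g • A).toSet ↔ h ∈ ellipsoidsIn A.toSet := by
  have himp {k : GL (Fin n) ℝ} {l : Matrix (Fin n) (Fin n) ℝ} {B : Body n}
      (hl : l ∈ ellipsoidsIn B.toSet) : k.val * l ∈ ellipsoidsIn (k • B).toSet :=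
    (matImage_mul _ l _).trans_subset (matImage_mono _ hl)
  refine ⟨fun hh => ?_, himp⟩
  simpa [← mul_assoc] using himp (k := g⁻¹) hh

theorem mem_Jset_iff {A : Body n} :
    A ∈ Jset n ↔ 1 ∈ ellipsoidsIn A.toSet ∧ ∀ h ∈ ellipsoidsIn A.toSet, |h.det| ≤ 1 := by
  have hone : 1 ∈ ellipsoidsIn A.toSet ↔ unitBall n ⊆ A.toSet := by
    rw [ellipsoidsIn, mem_ofPred_eq, matImage_one]
  refine and_congr hone.symm ⟨fun hA h hh => ?_, fun hA g => hA g⟩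
  by_cases hdet : h.det = 0
  · simp [hdet]
  · exact hA (Matrix.GeneralLinearGroup.mkOfDetNeZero h hdet) hh

theorem Body.exists_closedBall_subset_interior (A : Body n) :
    ∃ r > 0, closedBall 0 r ⊆ interior A.toSet :=
  nhds_basis_closedBall.mem_iff.1 (isOpen_interior.mem_nhds A.zero_mem_interior)

theorem Body.eventually_subset {A : Body n} {K : Set (Euc n)} (hK : IsCompact K)
    (hKA : K ⊆ interior A.toSet) : ∀ᶠ B : Body n in 𝓝 A, K ⊆ B.toSet :=
  (continuous_subtype_val.continuousAt.eventually
    (eventually_subset_of_subset_interior hK hKA)).mono fun (B : Body n) hB => hB (convex B)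

theorem exists_smul_mem_Jset (A : Body n) : ∃ g : GL (Fin n) ℝ, g • A ∈ Jset n := by
  obtain ⟨r, hr, hrA⟩ := A.exists_closedBall_subset_interior
  have hrmem : r • 1 ∈ ellipsoidsIn A.toSet :=
    smul_one_mem_ellipsoidsIn hr.le (hrA.trans interior_subset)
  obtain ⟨g, hg, hmax⟩ := (isCompact_ellipsoidsIn A.isCompact).exists_isMaxOn ⟨_, hrmem⟩
    continuous_id.matrix_det.abs.continuousOn
  have hdet : 0 < |g.det| := by
    refine lt_of_lt_of_le ?_ (hmax hrmem)
    simp [hr.ne']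
  lift g to GL (Fin n) ℝ using (Matrix.isUnit_iff_isUnit_det g).2 (abs_pos.1 hdet).isUnit
  have hmem {h : Matrix (Fin n) (Fin n) ℝ} :
      h ∈ ellipsoidsIn (g⁻¹ • A).toSet ↔ g.val * h ∈ ellipsoidsIn A.toSet := by
    rw [← mul_mem_ellipsoidsIn_smul_iff g, smul_inv_smul]
  refine ⟨g⁻¹, mem_Jset_iff.2 ⟨by rwa [hmem, mul_one], fun h hh => ?_⟩⟩
  have hle : |(g.val * h).det| ≤ |g.val.det| := hmax (hmem.1 hh)
  rw [Matrix.det_mul, abs_mul] at hle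
  exact (mul_le_iff_le_one_right hdet).1 hle

theorem Body.eventually_smul_mem_ellipsoidsIn {A : Body n} {h : Matrix (Fin n) (Fin n) ℝ}
    (hh : h ∈ ellipsoidsIn A.toSet) {t : ℝ} (ht : t ∈ Ico 0 1) :
    ∀ᶠ B : Body n in 𝓝 A, t • h ∈ ellipsoidsIn B.toSet := by
  refine Body.eventually_subset ((isCompact_closedBall 0 1).image
    (LinearMap.continuous_of_finiteDimensional _)) (image_subset_iff.2 fun x hx => ?_)
  simpa using A.convex.combo_interior_self_mem_interior A.zero_mem_interior
    (mem_ellipsoidsIn.1 hh x hx) (sub_pos.2 ht.2) ht.1 (sub_add_cancel 1 t)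

theorem isClosed_Jset (n : ℕ) : IsClosed (Jset n) := by
  refine isClosed_iff_frequently.2 fun A hA => mem_Jset_iff.2 ⟨?_, fun h hh => ?_⟩
  · have hclosed : IsClosed {B : Body n | unitBall n ⊆ B.toSet} :=
      (isClosed_setOf_subset (unitBall n)).preimage continuous_subtype_val
    exact (matImage_one _).trans_subset
      (isClosed_iff_frequently.1 hclosed A (hA.mono fun B hB => hB.1))
  · have hlt : ∀ᶠ t : ℝ in 𝓝[<] 1, |(t • h).det| ≤ 1 := by
      filter_upwards [Ico_mem_nhdsLT zero_lt_one] with t ht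
      obtain ⟨B, hB, hBh⟩ :=
        (hA.and_eventually (Body.eventually_smul_mem_ellipsoidsIn hh ht)).exists
      exact (mem_Jset_iff.1 hB).2 _ hBh
    have hcont : Continuous fun t : ℝ => |(t • h).det| :=
      (continuous_id.smul continuous_const).matrix_det.abs
    have hlim : Tendsto (fun t : ℝ => |(t • h).det|) (𝓝[<] 1) (𝓝 |h.det|) := by
      simpa using (hcont.tendsto 1).mono_left nhdsWithin_le_nhds
    exact le_of_tendsto hlim hlt

theorem exists_isCompact_forall_inv_smul_mem_Jset (A : Body n) :
    ∃ K : Set (GL (Fin n) ℝ), IsCompact K ∧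
      ∀ᶠ B : Body n in 𝓝 A, ∀ g : GL (Fin n) ℝ, g⁻¹ • B ∈ Jset n → g ∈ K := by
  obtain ⟨r, hr, hrA⟩ := A.exists_closedBall_subset_interior
  obtain ⟨R, hR, hAR⟩ := A.isCompact.isBounded.subset_ball_lt 0 0
  refine ⟨_, isCompact_setOf_norm_le_and_le_norm_det R (pow_pos hr n), ?_⟩
  have hsub : ∀ᶠ B : Body n in 𝓝 A, B.toSet ⊆ ball 0 R :=
    ((NonemptyCompacts.isOpen_subsets_of_isOpen isOpen_ball).preimage
      continuous_subtype_val).mem_nhds hAR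
  filter_upwards [hsub, Body.eventually_subset (isCompact_closedBall 0 r) hrA] with B hBR hrB g hg
  obtain ⟨hone, hmax⟩ := mem_Jset_iff.1 hg
  constructor
  · have hgB : ↑g ∈ ellipsoidsIn B.toSet := by
      simpa using (mul_mem_ellipsoidsIn_smul_iff g).2 hone
    have hgR := ellipsoidsIn_mono (hBR.trans ball_subset_closedBall) hgB
    rwa [ellipsoidsIn_closedBall hR.le, mem_closedBall_zero_iff] at hgR
  · have hle := hmax _ ((mul_mem_ellipsoidsIn_smul_iff g⁻¹).2 (smul_one_mem_ellipsoidsIn hr.le hrB))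
    rw [Matrix.det_mul, Matrix.det_smul, Fintype.card_fin, Matrix.det_one, mul_one, abs_mul,
      abs_det_val_inv, abs_of_pos (pow_pos hr n), inv_mul_le_one₀ (abs_pos.2 g.det_ne_zero)] at hle
    exact hle

theorem mem_orthogonalGroup_of_mem_Jset {A : Body n} (hA : A ∈ Jset n)
    {g : Matrix (Fin n) (Fin n) ℝ} (hg : g ∈ ellipsoidsIn A.toSet) (hdet : |g.det| = 1) :
    g ∈ Matrix.orthogonalGroup (Fin n) ℝ := by
  obtain ⟨hone, hmax⟩ := mem_Jset_iff.1 hA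
  have hg_unit : IsUnit g := by
    rw [Matrix.isUnit_iff_isUnit_det, isUnit_iff_ne_zero, ← abs_pos, hdet]
    exact one_pos
  obtain ⟨P, hP, U, hU, rfl⟩ := exists_posDef_mul_unitary hg_unit
  have hUdet : ‖U.det‖ = 1 := CStarRing.norm_of_mem_unitary (Matrix.det_of_mem_unitary hU)
  have hPdet : P.det = 1 := by
    rwa [Matrix.det_mul, abs_mul, ← Real.norm_eq_abs U.det, hUdet, mul_one,
      abs_of_pos hP.det_pos] at hdet
  have hPmem : P ∈ ellipsoidsIn A.toSet := by
    simpa [mul_assoc, Unitary.mul_star_self_of_mem hU] using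
      mul_mem_ellipsoidsIn_of_mem_orthogonalGroup hg (Unitary.star_mem hU)
  have hmid : (midpoint ℝ P 1).det ^ 2 ≤ 1 :=
    (sq_le_one_iff_abs_le_one _).2
      (hmax _ ((convex_ellipsoidsIn A.convex).midpoint_mem hPmem hone))
  obtain rfl : P = 1 := by
    by_contra hP1
    exact ((det_lt_sq_det_midpoint_one hP hP1).trans_le hmid).ne hPdet
  rwa [one_mul]

theorem abs_det_eq_one_of_smul_mem_Jset {A : Body n} {g : GL (Fin n) ℝ} (hA : A ∈ Jset n)
    (hgA : g • A ∈ Jset n) : |(g : Matrix (Fin n) (Fin n) ℝ).det| = 1 := by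
  have hle {k : GL (Fin n) ℝ} {B : Body n} (hB : B ∈ Jset n) (hkB : k • B ∈ Jset n) :
      |k.val.det| ≤ 1 := by
    refine (mem_Jset_iff.1 hkB).2 _ ?_
    simpa using (mul_mem_ellipsoidsIn_smul_iff k).2 (mem_Jset_iff.1 hB).1
  have hinv : |g⁻¹.val.det| ≤ 1 := hle hgA (by rwa [inv_smul_smul])
  refine (hle hA hgA).antisymm ?_
  rwa [abs_det_val_inv, inv_le_one₀ (abs_pos.2 g.det_ne_zero)] at hinv

theorem onOrbitRel_iff {A B : Jset n} :
    onOrbitRel n A B ↔ MulAction.orbitRel (GL (Fin n) ℝ) (Body n) (A : Body n) B := by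
  rw [← glOrbitRel_iff]
  constructor
  · rintro ⟨U, hU, h⟩
    exact ⟨Unitary.toUnits ⟨U, hU⟩, h⟩
  · rintro ⟨g, h⟩
    have hgA : g • (A : Body n) = B := Body.ext h
    have hg : g.val ∈ ellipsoidsIn (B : Body n).toSet := by
      simpa [hgA] using (mul_mem_ellipsoidsIn_smul_iff g).2 (mem_Jset_iff.1 A.2).1
    have hdet := abs_det_eq_one_of_smul_mem_Jset A.2 (hgA.symm ▸ B.2)
    exact ⟨g, mem_orthogonalGroup_of_mem_Jset B.2 hg hdet, h⟩

end John

/-- The orbit space `𝓑(n)/GL(n,ℝ)` is homeomorphic to the orbit space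
`J(n)/O(n)`, via the homeomorphism induced by the inclusion `J(n) ↪ 𝓑(n)`. -/
theorem orbit_space_homeo_J (n : ℕ) :
    ∃ φ : Quot (onOrbitRel n) ≃ₜ Quot (glOrbitRel n),
      ∀ A : ↥(Jset n), φ (Quot.mk (onOrbitRel n) A) = Quot.mk (glOrbitRel n) (A : Body n) := by
  have hgl : glOrbitRel n = (MulAction.orbitRel (GL (Fin n) ℝ) (Body n)).r :=
    funext₂ fun _ _ => propext glOrbitRel_iff
  rw [hgl]
  exact exists_homeomorph_orbitRel_quotient (fun _ _ => onOrbitRel_iff) (isClosed_Jset n)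
    exists_smul_mem_Jset exists_isCompact_forall_inv_smul_mem_Jset

end
end

section
/- The orbit space 𝓑(n)/GL(n,ℝ) (the Banach–Mazur compactum BM(n)) is a compact metrizable topological space. -/
open scoped Pointwise
open TopologicalSpace

noncomputable section

/-!
Hausdorffness of the quotient follows from properness of the action of the general linear group on
the symmetric bodies. If `u • K = L` with `K` near `K₀` and `L` near `L₀`, then `K` contains a fixed
ball and `L` lies in a fixed ball, which bounds `‖u‖`; exchanging `K` and `L` bounds `‖u⁻¹‖`, so `u`
stays in a compact subset of the group. That nearby bodies share a ball is Rådström cancellation: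
`closedBall 0 (r + s) ⊆ K ⊆ L + closedBall 0 s` forces `closedBall 0 r ⊆ L`.

For compactness, a basis of maximal determinant among families in a body `K` is an Auerbach basis
of `K`, so some linear automorphism takes it to any prescribed basis `b`. Hence every orbit meets
the set of bodies having `b` as an Auerbach basis. This set is compact, because on it the condition
of nonempty interior, the only one that is not closed, holds automatically.
-/

open Filter Metric Module MulAction Set Topology

section Action

variable {M X : Type*} [Monoid M] [MulAction M X] [TopologicalSpace X] [ContinuousConstSMul M X]

instance : MulAction M (NonemptyCompacts X) where
  smul c K := K.map (c • ·) (continuous_const_smul c)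
  one_smul K := NonemptyCompacts.ext (one_smul M (K : Set X) :)
  mul_smul c d K := NonemptyCompacts.ext (mul_smul c d (K : Set X) :)

theorem coe_smul_nonemptyCompacts (c : M) (K : NonemptyCompacts X) :
    ((c • K : NonemptyCompacts X) : Set X) = c • (K : Set X) := rfl

end Action

instance {M X : Type*} [Monoid M] [MulAction M X] [TopologicalSpace M] [TopologicalSpace X]
    [ContinuousSMul M X] : ContinuousSMul M (NonemptyCompacts X) where
  continuous_smul := continuous_snd.nonemptyCompacts_map'
    (g := fun (p : M × NonemptyCompacts X) x => p.1 • x) (by fun_prop)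

theorem compactSpace_orbitRel_quotient {G X : Type*} [Group G] [MulAction G X] [TopologicalSpace X]
    {S : Set X} (hS : IsCompact S) (h : ∀ x, ∃ g : G, g • x ∈ S) :
    CompactSpace (orbitRel.Quotient G X) := by
  have himage : Quotient.mk (orbitRel G X) '' S = univ := by
    refine eq_univ_of_forall fun q => ?_
    induction q using Quotient.inductionOn with | _ x
    obtain ⟨g, hg⟩ := h x
    exact ⟨g • x, hg, Quotient.sound ⟨g, rfl⟩⟩
  exact ⟨himage ▸ hS.image continuous_quotient_mk'⟩

section Hyperspace

variable {X : Type*} [TopologicalSpace X] [T2Space X]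

theorem isClosed_setOf_mem_nonemptyCompacts (x : X) :
    IsClosed {K : NonemptyCompacts X | x ∈ K} := by
  simpa only [inter_singleton_nonempty] using!
    NonemptyCompacts.isClosed_inter_nonempty_of_isClosed (isClosed_singleton (x := x))

theorem isClosed_setOf_mapsTo_prod {f : X × X → X} (hf : Continuous f) :
    IsClosed {K : NonemptyCompacts X | MapsTo f (K ×ˢ K : Set (X × X)) K} := by
  have h : IsClosed {K : NonemptyCompacts X | (K ×ˢ K).map f hf ⊔ K = K} :=
    isClosed_eq ((hf.nonemptyCompacts_map.comp (by fun_prop)).sup continuous_id) continuous_id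
  convert! h using 3 with K
  rw [sup_eq_right, ← SetLike.coe_subset_coe, NonemptyCompacts.coe_map,
    NonemptyCompacts.coe_prod, mapsTo_iff_image_subset]

end Hyperspace

theorem isClosed_setOf_convex {E : Type*} [AddCommGroup E] [Module ℝ E] [TopologicalSpace E]
    [ContinuousAdd E] [ContinuousConstSMul ℝ E] [T2Space E] :
    IsClosed {K : NonemptyCompacts E | Convex ℝ (K : Set E)} := by
  have h : {K : NonemptyCompacts E | Convex ℝ (K : Set E)} =
      ⋂ (a : ℝ) (b : ℝ) (_ : 0 ≤ a) (_ : 0 ≤ b) (_ : a + b = 1),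
        {K : NonemptyCompacts E | MapsTo (fun p : E × E => a • p.1 + b • p.2)
          (K ×ˢ K : Set (E × E)) K} := by
    ext K
    simp only [mem_iInter, mem_ofPred_eq]
    exact ⟨fun h a b ha hb hab p hp => h hp.1 hp.2 ha hb hab,
      fun h x hx y hy a b ha hb hab => h a b ha hb hab (mk_mem_prod hx hy)⟩
  rw [h]
  exact isClosed_iInter fun a => isClosed_iInter fun b => isClosed_iInter fun _ =>
    isClosed_iInter fun _ => isClosed_iInter fun _ => isClosed_setOf_mapsTo_prod (by fun_prop)

theorem isClosed_setOf_eq_neg {E : Type*} [InvolutiveNeg E] [TopologicalSpace E] [ContinuousNeg E]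
    [T2Space E] : IsClosed {K : NonemptyCompacts E | (K : Set E) = -(K : Set E)} := by
  have h : IsClosed {K : NonemptyCompacts E | K = K.map Neg.neg continuous_neg} :=
    isClosed_eq continuous_id continuous_neg.nonemptyCompacts_map
  simpa only [← SetLike.coe_set_eq, NonemptyCompacts.coe_map, image_neg_eq_neg] using h

/-- Rådström's cancellation law. -/
theorem subset_of_add_subset_add {E : Type*} [AddCommGroup E] [Module ℝ E] [TopologicalSpace E]
    [IsTopologicalAddGroup E] [ContinuousSMul ℝ E] [LocallyConvexSpace ℝ E] {A B C : Set E}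
    (hB : Convex ℝ B) (hB' : IsClosed B) (hC : IsCompact C) (hC' : C.Nonempty)
    (h : A + C ⊆ B + C) : A ⊆ B := by
  intro x hx
  by_contra hxB
  obtain ⟨f, s, hfB, hfx⟩ := geometric_hahn_banach_closed_point hB hB' hxB
  obtain ⟨c, hc, hmax⟩ := hC.exists_isMaxOn hC' f.continuous.continuousOn
  obtain ⟨b, hb, d, hd, hbd⟩ := h (add_mem_add hx hc)
  have hsum : f b + f d = f x + f c := by simpa using congrArg f hbd
  linarith [hfB b hb, isMaxOn_iff.1 hmax d hd]

theorem exists_eventually_subset_closedBall {E : Type*} [SeminormedAddCommGroup E]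
    (K : NonemptyCompacts E) :
    ∃ R > 0, ∀ᶠ L : NonemptyCompacts E in 𝓝 K, (L : Set E) ⊆ closedBall 0 R := by
  obtain ⟨R, hR, hKR⟩ := K.isCompact.isBounded.subset_ball_lt 0 0
  refine ⟨R, hR, ?_⟩
  filter_upwards [(NonemptyCompacts.isOpen_subsets_of_isOpen isOpen_ball).mem_nhds hKR] with L hL
  exact hL.trans ball_subset_closedBall

theorem zero_mem_interior_of_convex_of_eq_neg {E : Type*} [AddCommGroup E] [Module ℝ E]
    [TopologicalSpace E] [IsTopologicalAddGroup E] [ContinuousConstSMul ℝ E] {s : Set E}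
    (hconv : Convex ℝ s) (hsymm : s = -s) (hinterior : (interior s).Nonempty) :
    (0 : E) ∈ interior s := by
  obtain ⟨x, hx⟩ := hinterior
  have hx' : -x ∈ s := by rw [hsymm, Set.neg_mem_neg]; exact interior_subset hx
  simpa using hconv.combo_interior_self_mem_interior hx hx' (a := 1 / 2) (b := 1 / 2)
    (by norm_num) (by norm_num) (by norm_num)

theorem isCompact_setOf_units_norm_le {A : Type*} [NormedRing A] [ProperSpace A] (c d : ℝ) :
    IsCompact {u : Aˣ | ‖(u : A)‖ ≤ c ∧ ‖(↑u⁻¹ : A)‖ ≤ d} := by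
  have h := Units.isClosedEmbedding_embedProduct.isCompact_preimage
    ((isCompact_closedBall (0 : A) c).prod
      ((isCompact_closedBall (0 : A) d).image MulOpposite.continuous_op))
  convert h using 1
  ext u
  simp [Units.embedProduct]

variable {E : Type*} [NormedAddCommGroup E] [NormedSpace ℝ E]

theorem closedBall_subset_of_dist_lt [ProperSpace E] {K L : NonemptyCompacts E} {x : E} {r s : ℝ}
    (hL : Convex ℝ (L : Set E)) (hr : 0 ≤ r) (hK : closedBall x (r + s) ⊆ K) (hKL : dist K L < s) :
    closedBall x r ⊆ L := by
  have hs : 0 ≤ s := dist_nonneg.trans hKL.le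
  have hKL' : (K : Set E) ⊆ thickening s L := fun y hy =>
    mem_thickening_iff.2 <| exists_dist_lt_of_hausdorffDist_lt hy hKL <|
      hausdorffEDist_ne_top_of_nonempty_of_bounded K.nonempty L.nonempty
        K.isCompact.isBounded L.isCompact.isBounded
  refine subset_of_add_subset_add hL L.isCompact.isClosed (isCompact_closedBall 0 s)
    (nonempty_closedBall.2 hs) ?_
  calc closedBall x r + closedBall 0 s = closedBall x (r + s) := by
        rw [closedBall_add_closedBall hr hs, add_zero]
    _ ⊆ thickening s (L : Set E) := hK.trans hKL'
    _ = (L : Set E) + ball 0 s := (add_ball_zero _ _).symm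
    _ ⊆ (L : Set E) + closedBall 0 s := add_subset_add_left ball_subset_closedBall

theorem opNorm_le_of_mapsTo_closedBall {F : Type*} [NormedAddCommGroup F] [NormedSpace ℝ F]
    {f : E →L[ℝ] F} {r R : ℝ} (hr : 0 < r) (hR : 0 ≤ R)
    (hf : MapsTo f (closedBall 0 r) (closedBall 0 R)) : ‖f‖ ≤ R / r := by
  refine f.opNorm_le_of_unit_norm (by positivity) fun x hx => ?_
  have hrx : r • x ∈ closedBall 0 r := by simp [norm_smul, hx, abs_of_pos hr]
  have := mem_closedBall_zero_iff.1 (hf hrx)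
  rwa [map_smul, norm_smul, Real.norm_of_nonneg hr.le, ← le_div_iff₀' hr] at this

instance : ContinuousSMul (E →L[ℝ] E) E where
  continuous_smul := isBoundedBilinearMap_apply.continuous

variable (E) in
/-- The convex bodies of `E` symmetric about the origin, a subset of the hyperspace of `E` stable
under linear automorphisms. The general linear group is encoded as the units of `E →L[ℝ] E`, which
equips it with its usual topology. -/
def symmetricConvexBodies : SubMulAction (E →L[ℝ] E)ˣ (NonemptyCompacts E) where
  carrier := {K | Convex ℝ (K : Set E) ∧ (interior (K : Set E)).Nonempty ∧
    (K : Set E) = -(K : Set E)}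
  smul_mem' u K := by
    rintro ⟨hconv, hinterior, hsymm⟩
    refine ⟨hconv.linear_image (u : E →L[ℝ] E).toLinearMap, ?_, ?_⟩
    · rw [coe_smul_nonemptyCompacts, interior_smul]
      exact hinterior.smul_set
    · rw [coe_smul_nonemptyCompacts, ← smul_set_neg, ← hsymm]

theorem interior_nonempty_iff_span_eq_top [FiniteDimensional ℝ E] {s : Set E}
    (hconv : Convex ℝ s) (hsymm : s = -s) (hne : s.Nonempty) :
    (interior s).Nonempty ↔ Submodule.span ℝ s = ⊤ := by
  have h0 : (0 : E) ∈ s := by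
    obtain ⟨x, hx⟩ := hne
    have hx' : -x ∈ s := by rwa [hsymm, Set.neg_mem_neg]
    simpa only [midpoint_self_neg] using hconv.midpoint_mem hx hx'
  rw [hconv.interior_nonempty_iff_affineSpan_eq_top,
    AffineSubspace.affineSpan_eq_top_iff_vectorSpan_eq_top_of_nonempty ℝ E E hne,
    vectorSpan_eq_span_vsub_set_right ℝ h0]
  simp only [vsub_eq_sub, sub_zero, image_id']

theorem exists_eventually_closedBall_subset [ProperSpace E] (K : symmetricConvexBodies E) :
    ∃ r > 0, ∀ᶠ L : symmetricConvexBodies E in 𝓝 K, closedBall 0 r ⊆ (L : Set E) := by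
  obtain ⟨hconv, hinterior, hsymm⟩ := K.2
  obtain ⟨ρ, hρ, hρK⟩ := nhds_basis_closedBall.mem_iff.1
    (mem_interior_iff_mem_nhds.1 (zero_mem_interior_of_convex_of_eq_neg hconv hsymm hinterior))
  refine ⟨ρ / 2, half_pos hρ, ?_⟩
  filter_upwards [ball_mem_nhds K (half_pos hρ)] with L hL
  refine closedBall_subset_of_dist_lt (K := K) L.2.1 (half_pos hρ).le ?_ (mem_ball'.1 hL)
  rwa [add_halves]

theorem exists_eventually_norm_le_of_smul [ProperSpace E] (K L : symmetricConvexBodies E) :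
    ∃ c, ∀ᶠ p : symmetricConvexBodies E × symmetricConvexBodies E in 𝓝 (K, L),
      ∀ u : (E →L[ℝ] E)ˣ, u • p.1 = p.2 → ‖(u : E →L[ℝ] E)‖ ≤ c := by
  obtain ⟨r, hr, hK⟩ := exists_eventually_closedBall_subset K
  obtain ⟨R, hR, hL⟩ := exists_eventually_subset_closedBall (L : NonemptyCompacts E)
  refine ⟨R / r, ?_⟩
  filter_upwards [hK.prodMk_nhds (continuousAt_subtype_val.eventually hL)]
  rintro ⟨K', L'⟩ ⟨hK', hL'⟩ u (rfl : u • K' = L')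
  exact opNorm_le_of_mapsTo_closedBall hr hR.le fun x hx => hL' (smul_mem_smul_set (hK' hx))

instance [FiniteDimensional ℝ E] : ProperSMul (E →L[ℝ] E)ˣ (symmetricConvexBodies E) := by
  have : ProperSpace E := FiniteDimensional.proper_real E
  rw [properSMul_iff_continuousSMul_ultrafilter_tendsto_t2]
  refine ⟨inferInstance, fun 𝒰 L K hLK => ?_⟩
  obtain ⟨c, hc⟩ := exists_eventually_norm_le_of_smul K L
  obtain ⟨d, hd⟩ := exists_eventually_norm_le_of_smul L K
  have hbdd : ∀ᶠ p in (𝒰 : Filter ((E →L[ℝ] E)ˣ × symmetricConvexBodies E)),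
      p.1 ∈ {u : (E →L[ℝ] E)ˣ | ‖(u : E →L[ℝ] E)‖ ≤ c ∧ ‖(u⁻¹.val : E →L[ℝ] E)‖ ≤ d} := by
    filter_upwards [hLK.eventually hd, ((continuous_swap.tendsto _).comp hLK).eventually hc]
      with p hpd hpc
    exact ⟨hpc p.1 rfl, hpd p.1⁻¹ (inv_smul_smul _ _)⟩
  have : ProperSpace (E →L[ℝ] E) := FiniteDimensional.proper_real _
  obtain ⟨u, -, hu⟩ := (isCompact_setOf_units_norm_le c d).ultrafilter_le_nhds'
    (𝒰.map Prod.fst) hbdd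
  exact ⟨u, hu⟩

variable {ι : Type*}

theorem exists_basis_forall_mem {𝕜 V : Type*} [DivisionRing 𝕜] [AddCommGroup V] [Module 𝕜 V]
    (c : Basis ι 𝕜 V) {s : Set V} (hs : Submodule.span 𝕜 s = ⊤) :
    ∃ b : Basis ι 𝕜 V, ∀ i, b i ∈ s := by
  let b := Basis.ofSpan hs.ge
  refine ⟨b.reindex (b.indexEquiv c), fun i => ?_⟩
  rw [Basis.reindex_apply]
  exact Basis.ofSpan_subset hs.ge (mem_range_self _)

theorem continuous_basis_det [Fintype ι] [DecidableEq ι] (b : Basis ι ℝ E) : Continuous b.det :=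
  have : FiniteDimensional ℝ E := b.finiteDimensional_of_finite
  Continuous.matrix_det <| continuous_matrix fun i j =>
    (b.coord i).continuous_of_finiteDimensional.comp (continuous_apply j)

/-- A basis `b` is an Auerbach basis of `K` if `K` contains `b` and lies in the parallelepiped
`∑ i, [-1, 1] • b i`; when `K` is the unit ball of a norm, these are its Auerbach bases. -/
def IsAuerbachBasis (b : Basis ι ℝ E) (K : Set E) : Prop :=
  (∀ i, b i ∈ K) ∧ ∀ x ∈ K, ∀ i, |b.repr x i| ≤ 1

theorem exists_isAuerbachBasis [FiniteDimensional ℝ E] (c : Basis ι ℝ E) {K : Set E}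
    (hK : IsCompact K) (hspan : Submodule.span ℝ K = ⊤) :
    ∃ b : Basis ι ℝ E, IsAuerbachBasis b K := by
  classical
  have := FiniteDimensional.fintypeBasisIndex c
  obtain ⟨e, heK⟩ := exists_basis_forall_mem c hspan
  obtain ⟨v, hvK, hmax⟩ := (isCompact_univ_pi fun _ : ι => hK).exists_isMaxOn
    ⟨e, fun i _ => heK i⟩ (continuous_basis_det e).abs.continuousOn
  have hdet : 0 < |e.det v| := by
    refine one_pos.trans_le ?_
    simpa [e.det_self] using hmax (a := (e : ι → E)) fun i _ => heK i
  obtain ⟨hli, hsp⟩ := e.is_basis_iff_det.2 (abs_pos.1 hdet).isUnit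
  refine ⟨Basis.mk hli hsp.ge, fun i => ?_, fun x hx i => ?_⟩
  · rw [Basis.mk_apply]
    exact hvK i (mem_univ i)
  have hcramer : e.det v * (Basis.mk hli hsp.ge).repr x i = e.det (Function.update v i x) :=
    LinearMap.congr_fun (e.det_smul_mk_coord_eq_det_update hli hsp.ge i) x
  have hupdate : |e.det (Function.update v i x)| ≤ |e.det v| := by
    refine hmax fun j _ => ?_
    obtain rfl | hji := eq_or_ne j i
    · simpa using hx
    · simpa [hji] using hvK j (mem_univ j)
  rw [← hcramer, abs_mul] at hupdate
  exact le_of_mul_le_mul_left (by rwa [mul_one]) hdet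

theorem IsAuerbachBasis.exists_smul [FiniteDimensional ℝ E] {b : Basis ι ℝ E} {K : Set E}
    (h : IsAuerbachBasis b K) (c : Basis ι ℝ E) :
    ∃ u : (E →L[ℝ] E)ˣ, IsAuerbachBasis c (u • K) := by
  let f := b.equiv c (Equiv.refl ι)
  refine ⟨f.toContinuousLinearEquiv.toUnit, fun i => ⟨b i, h.1 i, ?_⟩, ?_⟩
  · exact b.equiv_apply i c (Equiv.refl ι)
  · rintro _ ⟨x, hx, rfl⟩ i
    have hrepr : c.repr (f x) i = b.repr x i := by simp [f, Basis.equiv]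
    exact (congrArg _ hrepr).trans_le (h.2 x hx i)

theorem isCompact_setOf_isAuerbachBasis [FiniteDimensional ℝ E] (b : Basis ι ℝ E) :
    IsCompact {K : symmetricConvexBodies E | IsAuerbachBasis b (K : Set E)} := by
  have : Finite ι := Module.Finite.finite_basis b
  have hbox : IsCompact {x : E | ∀ i, |b.repr x i| ≤ 1} := by
    have h := b.equivFun.toContinuousLinearEquiv.toHomeomorph.isCompact_preimage.2
      (isCompact_univ_pi fun _ : ι => isCompact_Icc (a := (-1 : ℝ)) (b := 1))
    convert h using 1
    ext x
    simp [abs_le, Pi.le_def, forall_and]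
  have hbasis : IsClosed {K : NonemptyCompacts E | ∀ i, b i ∈ K} := by
    simpa only [Set.ofPred_forall] using
      isClosed_iInter fun i => isClosed_setOf_mem_nonemptyCompacts (b i)
  rw [Subtype.isCompact_iff]
  convert (NonemptyCompacts.isCompact_subsets_of_isCompact hbox).inter_right
    ((isClosed_setOf_convex (E := E)).inter (isClosed_setOf_eq_neg.inter hbasis)) using 1
  ext K
  constructor
  · rintro ⟨K, hK, rfl⟩
    exact ⟨hK.2, K.2.1, K.2.2.2, hK.1⟩
  · rintro ⟨hKbox, hconv, hsymm, hbK⟩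
    have hspan : Submodule.span ℝ (K : Set E) = ⊤ :=
      top_unique (b.span_eq.ge.trans (Submodule.span_mono (range_subset_iff.2 hbK)))
    exact ⟨⟨K, hconv, (interior_nonempty_iff_span_eq_top hconv hsymm K.nonempty).2 hspan, hsymm⟩,
      ⟨hbK, hKbox⟩, rfl⟩

theorem exists_smul_isAuerbachBasis [FiniteDimensional ℝ E] (b : Basis ι ℝ E)
    (K : symmetricConvexBodies E) :
    ∃ u : (E →L[ℝ] E)ˣ, IsAuerbachBasis b ((u • K : symmetricConvexBodies E) : Set E) := by
  obtain ⟨hconv, hinterior, hsymm⟩ := K.2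
  obtain ⟨c, hc⟩ := exists_isAuerbachBasis b K.1.isCompact
    ((interior_nonempty_iff_span_eq_top hconv hsymm K.1.nonempty).1 hinterior)
  exact hc.exists_smul b

theorem banach_mazur_compact_metrizable_general (E : Type*) [NormedAddCommGroup E]
    [NormedSpace ℝ E] [FiniteDimensional ℝ E] :
    CompactSpace (orbitRel.Quotient (E →L[ℝ] E)ˣ (symmetricConvexBodies E)) ∧
      MetrizableSpace (orbitRel.Quotient (E →L[ℝ] E)ˣ (symmetricConvexBodies E)) := by
  have hcompact : CompactSpace (orbitRel.Quotient (E →L[ℝ] E)ˣ (symmetricConvexBodies E)) :=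
    compactSpace_orbitRel_quotient (isCompact_setOf_isAuerbachBasis (finBasis ℝ E))
      (exists_smul_isAuerbachBasis (finBasis ℝ E))
  have : ProperSpace E := FiniteDimensional.proper_real E
  have : T2Space (orbitRel.Quotient (E →L[ℝ] E)ˣ (symmetricConvexBodies E)) :=
    t2Space_quotient_mulAction_of_properSMul
  have : SecondCountableTopology (orbitRel.Quotient (E →L[ℝ] E)ˣ (symmetricConvexBodies E)) :=
    ContinuousConstSMul.secondCountableTopology
  exact ⟨hcompact, metrizableSpace_of_t3_secondCountable _⟩

theorem glOrbitRel_iff_s18 {n : ℕ} {A B : Body n} :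
    glOrbitRel n A B ↔ ∃ u : (Euc n →L[ℝ] Euc n)ˣ, u • A.toSet = B.toSet :=
  (Units.mapEquiv (Matrix.toEuclideanCLM (n := Fin n) (𝕜 := ℝ)).toMulEquiv).exists_congr
    fun _ => Iff.rfl

theorem glOrbitRel_eq_orbitRel (n : ℕ) :
    glOrbitRel n = ⇑(orbitRel (Euc n →L[ℝ] Euc n)ˣ (symmetricConvexBodies (Euc n))) :=
  funext₂ fun (_ _ : symmetricConvexBodies (Euc n)) => propext <| glOrbitRel_iff_s18.trans <|
    (exists_congr fun _ => (Subtype.ext_iff.trans SetLike.ext'_iff).symm).trans <|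
      Setoid.comm' (orbitRel (Euc n →L[ℝ] Euc n)ˣ (symmetricConvexBodies (Euc n)))

/-- The Banach–Mazur compactum `BM(n) = 𝓑(n)/GL(n,ℝ)` is a compact
metrizable space. -/
theorem banach_mazur_compact_metrizable (n : ℕ) :
    CompactSpace (Quot (glOrbitRel n)) ∧ MetrizableSpace (Quot (glOrbitRel n)) := by
  rw [glOrbitRel_eq_orbitRel]
  exact banach_mazur_compact_metrizable_general (Euc n)

end
end
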